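/- arXiv:0809.1643 — 2 statements merged into one kernel-verified Lean document; each statement's English description precedes it below -/
import Mathlib

section
/- Let p < q be reals, let n ≥ 1 and t ≥ 0 be integers, let f be (n+t+1)-times continuously differentiable on [p,q], and let x, x_0, …, x_n be pairwise distinct points of [p,q]. Define coefficients a_0 = 1 and a_k = −(a_0·A_k(x) + a_1·A_{k−1}(x) + … + a_{k−1}·A_1(x)) for k = 1, …, t. Then there exist points ξ_0, ξ_1, …, ξ_t in the smallest closed interval containing x, x_0, …, x_n such that f^{(t)}(x)/t! = Σ_{j=0}^{t} a_j·Ã^{(t−j)}_{0,1,…,n}[x] + ∏_{i=0}^{n}(x − x_i) · Σ_{j=0}^{t} a_j·f^{(t+n+1−j)}(ξ_j)/(t+n+1−j)!. -/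
/-- Divided difference `f[y i, y (i+1), …, y j]` defined by the standard recursion
`f[y_i,…,y_j] = (f[y_{i+1},…,y_j] − f[y_i,…,y_{j−1}])/(y_j − y_i)`. -/
noncomputable def divDiff (f : ℝ → ℝ) (y : ℕ → ℝ) (i j : ℕ) : ℝ :=
  if _h : j ≤ i then f (y i)
  else (divDiff f y (i + 1) j - divDiff f y i (j - 1)) / (y j - y i)
termination_by j - i
decreasing_by all_goals omega

/-- Neville iteration: `neville xs x g i j` is the iterate built from the initial
values `g j` (at node `xs j`) over the nodes `xs j, …, xs (j+i)`. -/
noncomputable def neville (xs : ℕ → ℝ) (x : ℝ) (g : ℕ → ℝ) : ℕ → ℕ → ℝ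
  | 0, j => g j
  | i + 1, j =>
      ((xs (i + 1 + j) - x) * neville xs x g i j - (xs j - x) * neville xs x g i (j + 1)) /
        (xs (i + 1 + j) - xs j)

/-- Aitken iteration with base index `r`: `aitken xs x g r i j` is the iterate
`d_{r,r+1,…,i,j}` (for `r ≤ i < j`) built from the initial values `g j` at the nodes `xs j`. -/
noncomputable def aitken (xs : ℕ → ℝ) (x : ℝ) (g : ℕ → ℝ) (r : ℕ) (i j : ℕ) : ℝ :=
  if _h : i ≤ r then ((xs j - x) * g r - (xs r - x) * g j) / (xs j - xs r)
  else ((xs j - x) * aitken xs x g r (i - 1) i - (xs i - x) * aitken xs x g r (i - 1) j) /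
        (xs j - xs i)
termination_by i
decreasing_by all_goals omega

/-- The full Aitken iterate `d_{r,r+1,…,n}` (equal to the initial value when `n = r`). -/
noncomputable def aitkenLast (xs : ℕ → ℝ) (x : ℝ) (g : ℕ → ℝ) (r n : ℕ) : ℝ :=
  if n ≤ r then g n else aitken xs x g r (n - 1) n

/-- Confluent divided difference `g[x,…,x (m times), xi]`, defined using
`g[x,…,x (m times)] = g^{(m−1)}(x)/(m−1)!` and `g[xi] = g xi`. -/
noncomputable def confDD (g : ℝ → ℝ) (x xi : ℝ) : ℕ → ℝ
  | 0 => g xi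
  | m + 1 => (confDD g x xi m - iteratedDeriv m g x / (Nat.factorial m : ℝ)) / (xi - x)

/-!
The Aitken iterate is the value at `x` of the Lagrange interpolant, hence linear in the initial
values. For `k ≤ t` take as initial values the Taylor remainders of order `k` of `f` at `x`, divided
by `(X i - x) ^ k`. Up to the factor `-∏ (x - X i)`, the resulting iterate is the coefficient of
degree `k + n + 1` of the Hermite interpolant of `f` with simple nodes `X i` and the node `x` of
multiplicity `k + 1`, which Rolle's theorem with multiplicities identifies with
`f⁽ᵏ⁺ⁿ⁺¹⁾(η) / (k + n + 1)!`. Expanding by linearity shows that the convolution of the Taylor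
coefficients of `f` with `r ↦ A_r(x)` is known up to these remainders, and `a` is the convolution
inverse of `r ↦ A_r(x)` up to order `t`.
-/

open Finset Polynomial

/-- The Taylor polynomial of degree at most `k` centred at `x` with prescribed Taylor coefficients
`c 0, …, c k`. -/
noncomputable def taylorSum {R : Type*} [CommRing R] (c : ℕ → R) (x : R) (k : ℕ) : R[X] :=
  ∑ m ∈ range (k + 1), C (c m) * (X - C x) ^ m

theorem natDegree_taylorSum_le {R : Type*} [CommRing R] (c : ℕ → R) (x : R) (k : ℕ) :
    (taylorSum c x k).natDegree ≤ k :=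
  natDegree_sum_le_of_forall_le _ _ fun m hm ↦ by
    have := natDegree_C_mul_le (c m) ((X - C x) ^ m)
    have := natDegree_pow_le_of_le m (natDegree_X_sub_C_le x)
    grind

theorem eval_iterate_derivative_taylorSum {R : Type*} [CommRing R] (c : ℕ → R) (x : R) {k m : ℕ}
    (hm : m ≤ k) : (derivative^[m] (taylorSum c x k)).eval x = m.factorial * c m := by
  simp only [taylorSum, iterate_derivative_sum, iterate_derivative_C_mul,
    iterate_derivative_X_sub_pow, eval_finsetSum, eval_mul, eval_C, eval_smul, eval_pow, eval_sub,
    eval_X, sub_self]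
  rw [sum_eq_single_of_mem m (by simpa using hm.trans_lt k.lt_succ_self)]
  · simp [Nat.descFactorial_self, mul_comm]
  · intro j _ hj
    rcases hj.lt_or_gt with hj | hj
    · simp [Nat.descFactorial_of_lt hj]
    · simp [Nat.sub_ne_zero_of_lt hj]

theorem iterate_derivative_eq_C_of_natDegree_le {R : Type*} [Semiring R] {P : R[X]} {N : ℕ}
    (hP : P.natDegree ≤ N) : derivative^[N] P = C (N.factorial * P.coeff N) := by
  have hdeg : (derivative^[N] P).natDegree ≤ 0 :=
    (natDegree_iterate_derivative P N).trans (Nat.sub_eq_zero_of_le hP).le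
  rw [eq_C_of_natDegree_le_zero hdeg, coeff_iterate_derivative, zero_add, Nat.descFactorial_self,
    nsmul_eq_mul]

section Interpolation

variable {K ι : Type*} [Field K] [DecidableEq ι] (s : Finset ι) (v : ι → K) (x : K)

/-- The polynomial of degree at most `#s` taking the values `h i` at the nodes `v i` and vanishing
at the further point `x`, written so that its coefficient of degree `#s` is visible. -/
noncomputable def rootedInterpolant (h : ι → K) : K[X] :=
  Lagrange.interpolate s v h -
    C ((Lagrange.interpolate s v h).eval x / ∏ i ∈ s, (x - v i)) * Lagrange.nodal s v

/-- The Taylor remainders `F i - ∑ m ≤ k, c m * (v i - x) ^ m` divided by `(v i - x) ^ k`. -/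
noncomputable def scaledTaylorRemainder (c : ℕ → K) (k : ℕ) (F : ι → K) (i : ι) : K :=
  (F i - (taylorSum c x k).eval (v i)) / (v i - x) ^ k

/-- The Hermite interpolant with values `F i` at the simple nodes `v i` and Taylor coefficients
`c 0, …, c k` at the node `x` of multiplicity `k + 1`. -/
noncomputable def hermiteInterpolant (c : ℕ → K) (k : ℕ) (F : ι → K) : K[X] :=
  taylorSum c x k + (X - C x) ^ k * rootedInterpolant s v x (scaledTaylorRemainder v x c k F)

variable {s v x}

theorem eval_rootedInterpolant_node (hv : Set.InjOn v s) (h : ι → K) {i : ι} (hi : i ∈ s) :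
    (rootedInterpolant s v x h).eval (v i) = h i := by
  rw [rootedInterpolant, eval_sub, eval_mul, Lagrange.eval_nodal_at_node hi, mul_zero, sub_zero,
    Lagrange.eval_interpolate_at_node h hv hi]

theorem eval_rootedInterpolant_self (hx : ∀ i ∈ s, v i ≠ x) (h : ι → K) :
    (rootedInterpolant s v x h).eval x = 0 := by
  have hprod : ∏ i ∈ s, (x - v i) ≠ 0 := prod_ne_zero_iff.2 fun i hi ↦ sub_ne_zero.2 (hx i hi).symm
  rw [rootedInterpolant, eval_sub, eval_mul, eval_C, Lagrange.eval_nodal, div_mul_cancel₀ _ hprod,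
    sub_self]

theorem natDegree_rootedInterpolant_le (hv : Set.InjOn v s) (h : ι → K) :
    (rootedInterpolant s v x h).natDegree ≤ #s :=
  natDegree_sub_le_of_le (natDegree_le_of_degree_le (Lagrange.degree_interpolate_lt h hv).le)
    ((natDegree_C_mul_le _ _).trans Lagrange.natDegree_nodal.le) |>.trans (max_self _).le

theorem coeff_rootedInterpolant_card (hv : Set.InjOn v s) (h : ι → K) :
    (rootedInterpolant s v x h).coeff #s =
      -((Lagrange.interpolate s v h).eval x / ∏ i ∈ s, (x - v i)) := by
  have hnodal : (Lagrange.nodal s v).coeff #s = 1 := by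
    simpa using (Lagrange.nodal_monic (s := s) (v := v)).coeff_natDegree
  rw [rootedInterpolant, coeff_sub, coeff_C_mul, hnodal, mul_one,
    coeff_eq_zero_of_degree_lt (Lagrange.degree_interpolate_lt h hv), zero_sub]

theorem eval_interpolate_scaledTaylorRemainder (hx : ∀ i ∈ s, v i ≠ x) (c : ℕ → K) (k : ℕ)
    (F : ι → K) :
    (Lagrange.interpolate s v (scaledTaylorRemainder v x c k F)).eval x =
      (Lagrange.interpolate s v fun i ↦ F i / (v i - x) ^ k).eval x - ∑ m ∈ range (k + 1),
        c m * (Lagrange.interpolate s v fun i ↦ 1 / (v i - x) ^ (k - m)).eval x := by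
  have hexpand : ∀ i ∈ s, scaledTaylorRemainder v x c k F i =
      ((fun i ↦ F i / (v i - x) ^ k) -
        ∑ m ∈ range (k + 1), c m • fun i ↦ 1 / (v i - x) ^ (k - m)) i := by
    intro i hi
    have hne : v i - x ≠ 0 := sub_ne_zero.2 (hx i hi)
    simp only [scaledTaylorRemainder, taylorSum, eval_finsetSum, eval_mul, eval_C, eval_pow,
      eval_sub, eval_X, sub_div, sum_div, Pi.sub_apply, Finset.sum_apply, Pi.smul_apply,
      smul_eq_mul]
    congr 1
    refine sum_congr rfl fun m hm ↦ ?_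
    rw [← pow_sub_mul_pow (v i - x) (Nat.lt_succ_iff.1 (mem_range.1 hm))]
    field_simp
  rw [Lagrange.interpolate_eq_of_values_eq_on _ _ hexpand]
  simp only [map_sub, map_sum, map_smul, eval_sub, eval_finsetSum, eval_smul, smul_eq_mul]

theorem eval_hermiteInterpolant_node (hv : Set.InjOn v s) (hx : ∀ i ∈ s, v i ≠ x) (c : ℕ → K)
    (k : ℕ) (F : ι → K) {i : ι} (hi : i ∈ s) :
    (hermiteInterpolant s v x c k F).eval (v i) = F i := by
  have hne : (v i - x) ^ k ≠ 0 := pow_ne_zero k (sub_ne_zero.2 (hx i hi))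
  simp only [hermiteInterpolant, eval_add, eval_mul, eval_sub, eval_pow, eval_X, eval_C,
    eval_rootedInterpolant_node hv _ hi, scaledTaylorRemainder, mul_div_cancel₀ _ hne,
    add_sub_cancel]

theorem eval_iterate_derivative_hermiteInterpolant (hx : ∀ i ∈ s, v i ≠ x) (c : ℕ → K) {k m : ℕ}
    (F : ι → K) (hm : m ≤ k) :
    (derivative^[m] (hermiteInterpolant s v x c k F)).eval x = m.factorial * c m := by
  have hdvd : (X - C x) ^ (k + 1) ∣ hermiteInterpolant s v x c k F - taylorSum c x k := by
    rw [hermiteInterpolant, add_sub_cancel_left, pow_succ]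
    exact mul_dvd_mul_left _ (dvd_iff_isRoot.2 (eval_rootedInterpolant_self hx _))
  have hroot : (derivative^[m] (hermiteInterpolant s v x c k F - taylorSum c x k)).eval x = 0 :=
    dvd_iff_isRoot.1 <| (dvd_pow_self _ (by omega)).trans
      (pow_sub_dvd_iterate_derivative_of_pow_dvd m hdvd)
  rw [iterate_derivative_sub, eval_sub, eval_iterate_derivative_taylorSum c x hm] at hroot
  exact sub_eq_zero.1 hroot

theorem natDegree_hermiteInterpolant_le (hv : Set.InjOn v s) (c : ℕ → K) (k : ℕ) (F : ι → K) :
    (hermiteInterpolant s v x c k F).natDegree ≤ k + #s :=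
  natDegree_add_le_of_degree_le ((natDegree_taylorSum_le c x k).trans (Nat.le_add_right k _))
    (natDegree_mul_le_of_le (by simp) (natDegree_rootedInterpolant_le hv _))

theorem coeff_hermiteInterpolant (hv : Set.InjOn v s) (hs : s.Nonempty) (c : ℕ → K) (k : ℕ)
    (F : ι → K) :
    (hermiteInterpolant s v x c k F).coeff (k + #s) =
      -((Lagrange.interpolate s v (scaledTaylorRemainder v x c k F)).eval x /
        ∏ i ∈ s, (x - v i)) := by
  have htaylor : (taylorSum c x k).coeff (k + #s) = 0 :=
    coeff_eq_zero_of_natDegree_lt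
      ((natDegree_taylorSum_le c x k).trans_lt (Nat.lt_add_of_pos_right hs.card_pos))
  have hpow : ((X - C x : K[X]) ^ k).coeff k = 1 := by
    simpa using ((monic_X_sub_C x).pow k).coeff_natDegree
  rw [hermiteInterpolant, coeff_add, htaylor, zero_add,
    coeff_mul_add_eq_of_natDegree_le (by simp) (natDegree_rootedInterpolant_le hv _), hpow,
    one_mul, coeff_rootedInterpolant_card hv]

end Interpolation

section Rolle

variable {s : Set ℝ} {g g' : ℝ → ℝ} {D : ℕ → ℝ → ℝ}

theorem exists_mem_Ioo_deriv_eq_zero (hs : s.OrdConnected)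
    (hg : ∀ y ∈ s, HasDerivWithinAt g (g' y) s y) {a b : ℝ} (ha : a ∈ s) (hb : b ∈ s)
    (hab : a < b) (hgab : g a = g b) : ∃ c ∈ Set.Ioo a b, g' c = 0 := by
  have hsub : Set.Icc a b ⊆ s := hs.out ha hb
  refine exists_hasDerivAt_eq_zero hab
    (fun y hy ↦ ((hg y (hsub hy)).continuousWithinAt).mono hsub) hgab fun y hy ↦ ?_
  exact (hg y (hsub (Set.Ioo_subset_Icc_self hy))).hasDerivAt
    (Filter.mem_of_superset (Icc_mem_nhds hy.1 hy.2) hsub)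

theorem exists_finset_deriv_eq_zero (hs : s.OrdConnected)
    (hg : ∀ y ∈ s, HasDerivWithinAt g (g' y) s y) {T : Finset ℝ} (hTs : ↑T ⊆ s)
    (hT : ∀ y ∈ T, g y = 0) :
    ∃ Z : Finset ℝ, #T ≤ #Z + 1 ∧ Disjoint Z T ∧ ↑Z ⊆ convexHull ℝ (T : Set ℝ) ∧
      ∀ y ∈ Z, g' y = 0 := by
  have rolle : ∀ a ∈ T, ∀ b ∈ T, a < b → ∃ c ∈ Set.Ioo a b, g' c = 0 := fun a ha b hb hab ↦
    exists_mem_Ioo_deriv_eq_zero hs hg (hTs ha) (hTs hb) hab ((hT a ha).trans (hT b hb).symm)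
  choose! c hc hc0 using rolle
  let C : Finset ℝ := {p ∈ T ×ˢ T | p.1 < p.2}.image fun p ↦ c p.1 p.2
  have hC : ∀ y ∈ C, ∃ a ∈ T, ∃ b ∈ T, a < b ∧ c a b = y := by grind
  have hinterleaved : #T ≤ #(C \ T) + 1 :=
    card_le_sdiff_of_interleaved fun a ha b hb hab _ ↦
      ⟨c a b, mem_image.2 ⟨(a, b), by simp [ha, hb, hab], rfl⟩, hc a ha b hb hab⟩
  refine ⟨C \ T, hinterleaved, sdiff_disjoint, fun y hy ↦ ?_, fun y hy ↦ ?_⟩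
  · obtain ⟨a, ha, b, hb, hab, rfl⟩ := hC y (mem_sdiff.1 hy).1
    exact (convex_convexHull ℝ _).ordConnected.out (subset_convexHull ℝ _ ha)
      (subset_convexHull ℝ _ hb) (Set.Ioo_subset_Icc_self (hc a ha b hb hab))
  · obtain ⟨a, ha, b, hb, hab, rfl⟩ := hC y (mem_sdiff.1 hy).1
    exact hc0 a ha b hb hab

theorem exists_multiset_deriv_eq_zero (hs : s.OrdConnected)
    (hD : ∀ y ∈ s, HasDerivWithinAt (D 0) (D 1 y) s y) {S : Multiset ℝ} (hSs : {y | y ∈ S} ⊆ s)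
    (hS : ∀ y, ∀ m < S.count y, D m y = 0) :
    ∃ S' : Multiset ℝ, S.card ≤ S'.card + 1 ∧ {y | y ∈ S'} ⊆ convexHull ℝ {y | y ∈ S} ∧
      ∀ y, ∀ m < S'.count y, D (m + 1) y = 0 := by
  have hcoe : (S.toFinset : Set ℝ) = {y | y ∈ S} := by ext; simp
  obtain ⟨Z, hcard, hdisj, hZhull, hZ⟩ := exists_finset_deriv_eq_zero hs hD (hcoe.trans_subset hSs)
    fun y hy ↦ hS y 0 (Multiset.count_pos.2 (Multiset.mem_toFinset.1 hy))
  rw [hcoe] at hZhull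
  -- Each zero of `D 0` loses one multiplicity, and Rolle adds a new zero in each gap.
  refine ⟨S - S.dedup + Z.val, ?_, fun y hy ↦ ?_, fun y m hm ↦ ?_⟩
  · have hle := Multiset.card_le_card S.dedup_le
    rw [Multiset.card_add, Multiset.card_sub S.dedup_le]
    change S.dedup.card ≤ Z.val.card + 1 at hcard
    omega
  · rcases Multiset.mem_add.1 hy with hyS | hyZ
    · exact subset_convexHull ℝ _ (Multiset.mem_of_le (Multiset.sub_le_self _ _) hyS)
    · exact hZhull hyZ
  · rw [Multiset.count_add, Multiset.count_sub, Multiset.count_dedup] at hm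
    by_cases hy : y ∈ Z
    · have hyS : y ∉ S := by simpa using disjoint_left.1 hdisj hy
      rw [Multiset.count_eq_zero_of_notMem hyS, Multiset.count_eq_one_of_mem Z.nodup hy] at hm
      obtain rfl : m = 0 := by omega
      exact hZ y hy
    · rw [Multiset.count_eq_zero_of_notMem (s := Z.val) hy] at hm
      have hcount : y ∉ S → S.count y = 0 := Multiset.count_eq_zero_of_notMem
      exact hS y (m + 1) (by grind)

theorem exists_iterated_deriv_eq_zero (hs : s.OrdConnected) {N : ℕ}
    (hD : ∀ m < N, ∀ y ∈ s, HasDerivWithinAt (D m) (D (m + 1) y) s y) {S : Multiset ℝ}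
    (hSs : {y | y ∈ S} ⊆ s) (hN : N < S.card) (hS : ∀ y, ∀ m < S.count y, D m y = 0) :
    ∃ η ∈ convexHull ℝ {y | y ∈ S}, D N η = 0 := by
  induction N generalizing D S with
  | zero =>
    obtain ⟨y, hy⟩ := Multiset.card_pos_iff_exists_mem.1 hN
    exact ⟨y, subset_convexHull ℝ _ hy, hS y 0 (Multiset.count_pos.2 hy)⟩
  | succ N ih =>
    obtain ⟨S', hcard, hhull, hS'⟩ := exists_multiset_deriv_eq_zero hs (hD 0 N.succ_pos) hSs hS
    obtain ⟨η, hη, hη0⟩ := ih (D := fun m ↦ D (m + 1)) (fun m hm ↦ hD (m + 1) (by omega))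
      (hhull.trans (convexHull_min hSs hs.convex)) (by omega) hS'
    exact ⟨η, convexHull_min hhull (convex_convexHull ℝ _) hη, hη0⟩

theorem exists_iterated_deriv_eq_factorial_mul_coeff (hs : s.OrdConnected) {N : ℕ}
    (hD : ∀ m < N, ∀ y ∈ s, HasDerivWithinAt (D m) (D (m + 1) y) s y)
    {P : ℝ[X]} (hP : P.natDegree ≤ N) {S : Multiset ℝ} (hSs : {y | y ∈ S} ⊆ s) (hN : N < S.card)
    (hS : ∀ y, ∀ m < S.count y, D m y = (derivative^[m] P).eval y) :
    ∃ η ∈ convexHull ℝ {y | y ∈ S}, D N η = N.factorial * P.coeff N := by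
  have hderiv : ∀ m < N, ∀ y ∈ s, HasDerivWithinAt (fun z ↦ D m z - (derivative^[m] P).eval z)
      (D (m + 1) y - (derivative^[m + 1] P).eval y) s y := fun m hm y hy ↦ by
    rw [Function.iterate_succ_apply']
    exact (hD m hm y hy).sub ((derivative^[m] P).hasDerivAt y).hasDerivWithinAt
  obtain ⟨η, hη, hη0⟩ := exists_iterated_deriv_eq_zero hs
    (D := fun m z ↦ D m z - (derivative^[m] P).eval z) hderiv hSs hN
    fun y m hm ↦ sub_eq_zero.2 (hS y m hm)
  refine ⟨η, hη, ?_⟩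
  rw [sub_eq_zero.1 hη0, iterate_derivative_eq_C_of_natDegree_le hP, eval_C]

end Rolle

theorem eq_sum_range_mul_of_conv_inverse {R : Type*} [CommRing R] {t : ℕ} {a A b c : ℕ → R}
    (ha0 : a 0 = 1) (hA0 : A 0 = 1)
    (ha : ∀ m, 1 ≤ m → m ≤ t → a m = -∑ j ∈ range m, a j * A (m - j))
    (hb : ∀ k ≤ t, ∑ m ∈ range (k + 1), c m * A (k - m) = b k) :
    c t = ∑ j ∈ range (t + 1), a j * b (t - j) := by
  have hcoeff (u w : ℕ → R) (m : ℕ) : PowerSeries.coeff m (.mk u * .mk w) =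
      ∑ j ∈ range (m + 1), u j * w (m - j) := by
    rw [PowerSeries.coeff_mul, Nat.sum_antidiagonal_eq_sum_range_succ_mk]
    simp only [PowerSeries.coeff_mk]
  have hinv : ∀ m ≤ t, PowerSeries.coeff m (.mk a * .mk A) =
      PowerSeries.coeff m (1 : PowerSeries R) := by
    intro m hm
    rw [hcoeff, sum_range_succ, Nat.sub_self, hA0, mul_one, PowerSeries.coeff_one]
    rcases m.eq_zero_or_pos with rfl | hpos
    · simp [ha0]
    · rw [ha m hpos hm, add_neg_cancel, if_neg hpos.ne']
  calc c t = PowerSeries.coeff t (1 * .mk c) := by simp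
    _ = PowerSeries.coeff t (.mk a * .mk A * .mk c) := by
      rw [PowerSeries.coeff_mul, PowerSeries.coeff_mul]
      exact sum_congr rfl fun p hp ↦ by rw [hinv p.1 (Nat.le.intro (mem_antidiagonal.1 hp))]
    _ = PowerSeries.coeff t (.mk a * (.mk c * .mk A)) := by
      rw [mul_assoc, mul_comm (PowerSeries.mk A)]
    _ = ∑ j ∈ range (t + 1), a j * b (t - j) := by
      rw [PowerSeries.coeff_mul, Nat.sum_antidiagonal_eq_sum_range_succ_mk]
      refine sum_congr rfl fun j _ ↦ ?_
      rw [PowerSeries.coeff_mk, hcoeff, hb (t - j) (t.sub_le j)]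

section HermiteRemainder

variable {ι : Type*} [DecidableEq ι] {s : Set ℝ} {T : Finset ι} {v : ι → ℝ} {x : ℝ}
  {D : ℕ → ℝ → ℝ}

theorem exists_iterated_deriv_eq_coeff_hermiteInterpolant (hs : s.OrdConnected)
    (hv : Set.InjOn v T) (hx : ∀ i ∈ T, v i ≠ x) (hsub : insert x (v '' T) ⊆ s) {k : ℕ}
    (hD : ∀ m < k + #T, ∀ y ∈ s, HasDerivWithinAt (D m) (D (m + 1) y) s y) :
    ∃ η ∈ convexHull ℝ (insert x (v '' T)), D (k + #T) η = (k + #T).factorial *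
      (hermiteInterpolant T v x (fun m ↦ D m x / m.factorial) k (D 0 ∘ v)).coeff (k + #T) := by
  let S : Multiset ℝ := Multiset.replicate (k + 1) x + (T.image v).val
  have hS : {y | y ∈ S} = insert x (v '' T) := by
    ext y
    grind [Multiset.mem_replicate]
  have hcard : k + #T < S.card := by
    have : (T.image v).val.card = #T := card_image_of_injOn hv
    simp only [S, Multiset.card_add, Multiset.card_replicate]
    omega
  have hagree : ∀ y, ∀ m < S.count y, D m y = (derivative^[m]
      (hermiteInterpolant T v x (fun m ↦ D m x / m.factorial) k (D 0 ∘ v))).eval y := by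
    intro y m hm
    rw [Multiset.count_add, Multiset.count_replicate] at hm
    by_cases hy : y ∈ T.image v
    · rw [Multiset.count_eq_one_of_mem (T.image v).nodup hy] at hm
      obtain ⟨i, hi, rfl⟩ := mem_image.1 hy
      obtain rfl : m = 0 := by simpa [(hx i hi).symm] using hm
      exact (eval_hermiteInterpolant_node hv hx _ _ (D 0 ∘ v) hi).symm
    · rw [Multiset.count_eq_zero_of_notMem hy] at hm
      obtain ⟨rfl, hmk⟩ : x = y ∧ m < k + 1 := by grind
      rw [eval_iterate_derivative_hermiteInterpolant hx _ _ (Nat.lt_succ_iff.1 hmk),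
        mul_div_cancel₀ _ (Nat.cast_ne_zero.2 m.factorial_ne_zero)]
  rw [← hS] at hsub ⊢
  exact exists_iterated_deriv_eq_factorial_mul_coeff hs hD
    (natDegree_hermiteInterpolant_le hv _ _ _) hsub hcard hagree

theorem exists_sum_taylorCoeff_mul_eval_interpolate_eq (hs : s.OrdConnected)
    (hT : T.Nonempty) (hv : Set.InjOn v T) (hx : ∀ i ∈ T, v i ≠ x) (hsub : insert x (v '' T) ⊆ s)
    {k : ℕ} (hD : ∀ m < k + #T, ∀ y ∈ s, HasDerivWithinAt (D m) (D (m + 1) y) s y) :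
    ∃ η ∈ convexHull ℝ (insert x (v '' T)),
      ∑ m ∈ range (k + 1), D m x / m.factorial *
          (Lagrange.interpolate T v fun i ↦ 1 / (v i - x) ^ (k - m)).eval x =
        (Lagrange.interpolate T v fun i ↦ D 0 (v i) / (v i - x) ^ k).eval x +
          (∏ i ∈ T, (x - v i)) * (D (k + #T) η / (k + #T).factorial) := by
  obtain ⟨η, hη, heq⟩ := exists_iterated_deriv_eq_coeff_hermiteInterpolant hs hv hx hsub hD
  have hprod : ∏ i ∈ T, (x - v i) ≠ 0 := prod_ne_zero_iff.2 fun i hi ↦ sub_ne_zero.2 (hx i hi).symm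
  have hfact : ((k + #T).factorial : ℝ) ≠ 0 := Nat.cast_ne_zero.2 (Nat.factorial_ne_zero _)
  refine ⟨η, hη, ?_⟩
  rw [heq, mul_div_cancel_left₀ _ hfact, coeff_hermiteInterpolant hv hT, mul_neg,
    mul_div_cancel₀ _ hprod, eval_interpolate_scaledTaylorRemainder hx]
  simp only [Function.comp_apply]
  ring

theorem exists_taylorCoeff_eq_sum_mul_eval_interpolate (hs : s.OrdConnected)
    (hT : T.Nonempty) (hv : Set.InjOn v T) (hx : ∀ i ∈ T, v i ≠ x) (hsub : insert x (v '' T) ⊆ s)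
    {t : ℕ} (hD : ∀ m < t + #T, ∀ y ∈ s, HasDerivWithinAt (D m) (D (m + 1) y) s y)
    {a : ℕ → ℝ} (ha0 : a 0 = 1)
    (ha : ∀ m, 1 ≤ m → m ≤ t → a m = -∑ j ∈ range m,
      a j * (Lagrange.interpolate T v fun i ↦ 1 / (v i - x) ^ (m - j)).eval x) :
    ∃ ξ : ℕ → ℝ, (∀ j ≤ t, ξ j ∈ convexHull ℝ (insert x (v '' T))) ∧
      D t x / t.factorial =
        ∑ j ∈ range (t + 1),
            a j * (Lagrange.interpolate T v fun i ↦ D 0 (v i) / (v i - x) ^ (t - j)).eval x +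
          (∏ i ∈ T, (x - v i)) * ∑ j ∈ range (t + 1),
            a j * D (t - j + #T) (ξ j) / (t - j + #T).factorial := by
  let A : ℕ → ℝ := fun r ↦ (Lagrange.interpolate T v fun i ↦ 1 / (v i - x) ^ r).eval x
  have hA0 : A 0 = 1 := by
    have hone : (fun i ↦ 1 / (v i - x) ^ 0) = 1 := by ext; simp
    simp only [A, hone, Lagrange.interpolate_one hv hT, eval_one]
  have htaylor : ∀ k ≤ t, _ := fun k hk ↦
    exists_sum_taylorCoeff_mul_eval_interpolate_eq hs hT hv hx hsub (k := k) (D := D)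
      fun m hm ↦ hD m (by omega)
  choose! η hη hsum using htaylor
  refine ⟨fun j ↦ η (t - j), fun j _ ↦ hη _ (t.sub_le j), ?_⟩
  rw [eq_sum_range_mul_of_conv_inverse (A := A) (c := fun m ↦ D m x / m.factorial) ha0 hA0 ha hsum,
    mul_sum, ← sum_add_distrib]
  exact sum_congr rfl fun j _ ↦ by ring

end HermiteRemainder

theorem eval_interpolate_eq_sub_div {K ι : Type*} [Field K] [DecidableEq ι] {s : Finset ι}
    {v : ι → K} (hv : Set.InjOn v s) (g : ι → K) (x : K) {i j : ι} (hi : i ∈ s) (hj : j ∈ s)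
    (hij : i ≠ j) :
    (Lagrange.interpolate s v g).eval x =
      ((v j - x) * (Lagrange.interpolate (s.erase j) v g).eval x
        - (v i - x) * (Lagrange.interpolate (s.erase i) v g).eval x) / (v j - v i) := by
  have hne : v i - v j ≠ 0 := sub_ne_zero.2 (hv.ne hi hj hij)
  rw [Lagrange.interpolate_eq_add_interpolate_erase g hv hi hj hij, ← neg_sub (v i) (v j)]
  simp only [Lagrange.basisDivisor, eval_add, eval_mul, eval_C, eval_sub, eval_X,
    ← neg_sub (v i) (v j), inv_neg]
  field_simp
  ring

theorem aitken_eq_eval_interpolate (xs : ℕ → ℝ) (x : ℝ) (g : ℕ → ℝ) {r i j : ℕ} (hri : r ≤ i)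
    (hij : i < j) (hxs : Set.InjOn xs ↑(insert j (Icc r i))) :
    aitken xs x g r i j = (Lagrange.interpolate (insert j (Icc r i)) xs g).eval x := by
  induction i, hri using Nat.le_induction generalizing j with
  | base =>
    have herase_r : (insert j (Icc r r)).erase r = {j} := by grind
    have herase_j : (insert j (Icc r r)).erase j = {r} := by grind
    rw [eval_interpolate_eq_sub_div hxs g x (i := r) (j := j) (by simp) (by simp) hij.ne,
      herase_r, herase_j, Lagrange.interpolate_singleton, Lagrange.interpolate_singleton,
      eval_C, eval_C, aitken, dif_pos le_rfl]
  | succ i hri ih =>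
    have herase_succ : (insert j (Icc r (i + 1))).erase (i + 1) = insert j (Icc r i) := by grind
    have herase_j : (insert j (Icc r (i + 1))).erase j = insert (i + 1) (Icc r i) := by grind
    rw [eval_interpolate_eq_sub_div hxs g x (i := i + 1) (j := j) (by grind) (by simp) hij.ne,
      herase_succ, herase_j, aitken, dif_neg (by omega), Nat.add_sub_cancel,
      ih i.lt_succ_self (hxs.mono (by grind)), ih (by omega) (hxs.mono (by grind))]

theorem aitken_pred_eq_eval_interpolate (xs : ℕ → ℝ) (x : ℝ) (g : ℕ → ℝ) {r n : ℕ} (hrn : r < n)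
    (hxs : Set.InjOn xs (Icc r n)) :
    aitken xs x g r (n - 1) n = (Lagrange.interpolate (Icc r n) xs g).eval x := by
  have hIcc : insert n (Icc r (n - 1)) = Icc r n := by grind
  rw [aitken_eq_eval_interpolate xs x g (by omega) (by omega) (hIcc ▸ hxs), hIcc]

theorem stmt_7_general {s : Set ℝ} (hs : s.OrdConnected) (n t : ℕ) (hn : 1 ≤ n)
    (f : ℝ → ℝ) (hf : ∀ m ≤ n + t, DifferentiableOn ℝ (iteratedDerivWithin m f s) s)
    (x : ℝ) (X : ℕ → ℝ) (hx : x ∈ s) (hX : ∀ i ≤ n, X i ∈ s) (hxX : ∀ i ≤ n, X i ≠ x)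
    (hXX : ∀ i j, i ≤ n → j ≤ n → i ≠ j → X i ≠ X j) (a : ℕ → ℝ) (ha0 : a 0 = 1)
    (hak : ∀ m, 1 ≤ m → m ≤ t →
      a m = -(∑ j ∈ range m, a j * aitken X x (fun i => 1 / (X i - x) ^ (m - j)) 0 (n - 1) n)) :
    ∃ ξ : ℕ → ℝ, (∀ j ≤ t, ξ j ∈ convexHull ℝ (insert x (X '' Set.Iic n))) ∧
      iteratedDerivWithin t f s x / t.factorial
        = (∑ j ∈ range (t + 1),
              a j * aitken X x (fun i => f (X i) / (X i - x) ^ (t - j)) 0 (n - 1) n)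
          + (∏ i ∈ range (n + 1), (x - X i))
            * ∑ j ∈ range (t + 1), a j * iteratedDerivWithin (t + n + 1 - j) f s (ξ j)
                / (t + n + 1 - j).factorial := by
  have hinj : Set.InjOn X (range (n + 1)) := fun i hi j hj ↦ by
    have := hXX i j
    grind
  have hnodes : (range (n + 1) : Set ℕ) = Set.Iic n := by ext; simp
  have haitken (g : ℕ → ℝ) : aitken X x g 0 (n - 1) n =
      (Lagrange.interpolate (range (n + 1)) X g).eval x := by
    rw [Nat.range_succ_eq_Icc_zero] at hinj ⊢
    exact aitken_pred_eq_eval_interpolate X x g hn hinj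
  have hderiv : ∀ m < t + #(range (n + 1)), ∀ y ∈ s, HasDerivWithinAt (iteratedDerivWithin m f s)
      (iteratedDerivWithin (m + 1) f s y) s y := by
    intro m hm y hy
    rw [iteratedDerivWithin_succ]
    exact (hf m (by grind) y hy).hasDerivWithinAt
  simp only [haitken] at hak ⊢
  obtain ⟨ξ, hξ, heq⟩ := exists_taylorCoeff_eq_sum_mul_eval_interpolate hs (by simp) hinj
    (fun i hi ↦ hxX i (by grind)) (by grind) (D := fun m ↦ iteratedDerivWithin m f s) hderiv ha0 hak
  rw [hnodes] at hξ
  refine ⟨ξ, hξ, heq.trans ?_⟩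
  rw [iteratedDerivWithin_zero]
  congr 2
  refine sum_congr rfl fun j hj ↦ ?_
  rw [card_range, show t + n + 1 - j = t - j + (n + 1) by grind]

theorem stmt_7 (p q : ℝ) (hpq : p < q) (n t : ℕ) (hn : 1 ≤ n)
    (f : ℝ → ℝ) (hf : ContDiffOn ℝ (n + t + 1 : ℕ) f (Set.Icc p q))
    (x : ℝ) (X : ℕ → ℝ)
    (hx : x ∈ Set.Icc p q) (hX : ∀ i ≤ n, X i ∈ Set.Icc p q)
    (hxX : ∀ i ≤ n, X i ≠ x)
    (hXX : ∀ i j, i ≤ n → j ≤ n → i ≠ j → X i ≠ X j)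
    (a : ℕ → ℝ) (ha0 : a 0 = 1)
    (hak : ∀ m, 1 ≤ m → m ≤ t →
      a m = -(∑ j ∈ Finset.range m, a j * aitken X x (fun i => 1 / (X i - x) ^ (m - j)) 0 (n - 1) n)) :
    ∃ ξ : ℕ → ℝ, (∀ j ≤ t, ξ j ∈ convexHull ℝ (insert x (X '' Set.Iic n))) ∧
      iteratedDerivWithin t f (Set.Icc p q) x / (Nat.factorial t : ℝ)
        = (∑ j ∈ Finset.range (t + 1),
              a j * aitken X x (fun i => f (X i) / (X i - x) ^ (t - j)) 0 (n - 1) n)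
          + (∏ i ∈ Finset.range (n + 1), (x - X i))
            * ∑ j ∈ Finset.range (t + 1),
                a j * iteratedDerivWithin (t + n + 1 - j) f (Set.Icc p q) (ξ j)
                  / (Nat.factorial (t + n + 1 - j) : ℝ) :=
  stmt_7_general Set.ordConnected_Icc n t hn f
    (fun m hm ↦ hf.differentiableOn_iteratedDerivWithin (by norm_cast; omega)
      (uniqueDiffOn_Icc hpq))
    x X hx hX hxX hXX a ha0 hak
end

section
/- Let P be a real polynomial with deg P ≤ n, let 1 ≤ r ≤ n, and let x, x_0, …, x_n be pairwise distinct reals. Then the divided difference P[x, x_0, …, x_{r−1}] equals the Neville iterate D_{r,r+1,…,n}[x] built from the initial values D_j[x] = P[x_j, x_0, …, x_{r−1}], j = r, …, n; that is, the Neville iteration reconstructs the divided-difference polynomial exactly, with zero error. -/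
/-!
The interpolant of a polynomial `P` at the nodes `s` is the remainder of `P` modulo the nodal
polynomial of `s`, and a divided difference is the top coefficient of an interpolant. Adding a node
`t` to `x₀, …, x_{r-1}` therefore gives `P[t, x₀, …, x_{r-1}] = Q(t)`, where `Q` is the quotient of
`P` by `∏ (X - x_i)`. The Neville iterate at `x` is the value at `x` of the interpolant of its
initial values `Q(x_r), …, Q(x_n)`, and this interpolant is `Q` because `deg Q ≤ n - r`.
-/

section

open Polynomial Lagrange Finset

variable {F R ι : Type*} [Field F] [CommRing R] [Nontrivial R] {s : Finset ι} {i : ι}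

lemma coeff_mul_basisDivisor {p : F[X]} {d : ℕ}
    (hp : p.degree < (d + 1 : ℕ)) (a b : F) :
    (p * basisDivisor a b).coeff (d + 1) = p.coeff d / (a - b) := by
  have htop : p.coeff (d + 1) = 0 := coeff_eq_zero_of_degree_lt hp
  rw [basisDivisor, mul_left_comm, coeff_C_mul, mul_sub, coeff_sub, coeff_mul_X, coeff_mul_C,
    htop, zero_mul, sub_zero, div_eq_inv_mul]

lemma interpolate_Icc_eq_add (v w : ℕ → F) {i j : ℕ} (hij : i < j)
    (hv : Set.InjOn v (Icc i j)) :
    interpolate (Icc i j) v w =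
      interpolate (Icc i (j - 1)) v w * basisDivisor (v i) (v j) +
        interpolate (Icc (i + 1) j) v w * basisDivisor (v j) (v i) := by
  have hright : (Icc i j).erase j = Icc i (j - 1) := by ext k; simp only [mem_erase, mem_Icc]; omega
  have hleft : (Icc i j).erase i = Icc (i + 1) j := by ext k; simp only [mem_erase, mem_Icc]; omega
  rw [interpolate_eq_add_interpolate_erase w hv (left_mem_Icc.2 hij.le) (right_mem_Icc.2 hij.le)
    hij.ne, hright, hleft]

lemma degree_modByMonic_nodal_lt (s : Finset ι) (v : ι → R) (P : R[X]) :
    (P %ₘ nodal s v).degree < #s := by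
  simpa only [degree_nodal] using degree_modByMonic_lt P (nodal_monic (s := s) (v := v))

lemma interpolate_eval_eq_modByMonic_nodal [DecidableEq ι] {v : ι → F} (hv : Set.InjOn v s)
    (P : F[X]) :
    interpolate s v (fun i => P.eval (v i)) = P %ₘ nodal s v := by
  refine (eq_interpolate_of_eval_eq _ hv (degree_modByMonic_nodal_lt s v P) fun i hi => ?_).symm
  conv_rhs => rw [← modByMonic_add_div P (nodal s v)]
  rw [eval_add, eval_mul, eval_nodal_at_node hi, zero_mul, add_zero]

lemma modByMonic_nodal_insert [DecidableEq ι] (hi : i ∉ s) (v : ι → R) (P : R[X]) :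
    P %ₘ nodal (insert i s) v =
      P %ₘ nodal s v + nodal s v * C ((P /ₘ nodal s v).eval (v i)) := by
  have hcard : (#s : WithBot ℕ) < (#s + 1 : ℕ) := by exact_mod_cast Nat.lt_succ_self #s
  refine (div_modByMonic_unique ((P /ₘ nodal s v) /ₘ (X - C (v i))) _ nodal_monic ⟨?_, ?_⟩).2
  · have hquot := modByMonic_add_div (P /ₘ nodal s v) (X - C (v i))
    rw [modByMonic_X_sub_C_eq_C_eval] at hquot
    conv_rhs => rw [← modByMonic_add_div P (nodal s v), ← hquot]
    rw [nodal_insert_eq_nodal hi]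
    ring
  · rw [degree_nodal, card_insert_of_notMem hi]
    refine (degree_add_le _ _).trans_lt
      (max_lt ((degree_modByMonic_nodal_lt s v P).trans hcard) ?_)
    exact (degree_mul_le_of_le degree_nodal.le degree_C_le).trans_lt (by rwa [add_zero])

lemma coeff_modByMonic_nodal_insert [DecidableEq ι] (hi : i ∉ s) (v : ι → R) (P : R[X]) :
    (P %ₘ nodal (insert i s) v).coeff #s = (P /ₘ nodal s v).eval (v i) := by
  have hrem : (P %ₘ nodal s v).coeff #s = 0 :=
    coeff_eq_zero_of_degree_lt (degree_modByMonic_nodal_lt s v P)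
  have hlead : (nodal s v).coeff #s = 1 := by
    simpa only [natDegree_nodal] using (nodal_monic (s := s) (v := v)).coeff_natDegree
  rw [modByMonic_nodal_insert hi, coeff_add, coeff_mul_C, hrem, hlead, zero_add, one_mul]

lemma divDiff_eq_coeff_interpolate (f : ℝ → ℝ) (y : ℕ → ℝ) (i d : ℕ)
    (hy : Set.InjOn y (Icc i (i + d))) :
    divDiff f y i (i + d) = (interpolate (Icc i (i + d)) y (f ∘ y)).coeff d := by
  induction d generalizing i with
  | zero => simp [divDiff]
  | succ d ih =>
    have hlower : Set.InjOn y (Icc i (i + d)) :=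
      hy.mono <| coe_subset.2 <| Icc_subset_Icc_right (by omega)
    have hupper : Set.InjOn y (Icc (i + 1) (i + 1 + d)) :=
      hy.mono <| coe_subset.2 <| Icc_subset_Icc (by omega) (by omega)
    have hdeg_lower := degree_interpolate_lt (f ∘ y) hlower
    have hdeg_upper := degree_interpolate_lt (f ∘ y) hupper
    rw [Nat.card_Icc, show i + d + 1 - i = d + 1 by omega] at hdeg_lower
    rw [Nat.card_Icc, show i + 1 + d + 1 - (i + 1) = d + 1 by omega] at hdeg_upper
    rw [divDiff, dif_neg (by omega), interpolate_Icc_eq_add y _ (by omega) hy,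
      show i + (d + 1) - 1 = i + d by omega, show i + (d + 1) = i + 1 + d by omega,
      ih i hlower, ih (i + 1) hupper, coeff_add, coeff_mul_basisDivisor hdeg_lower,
      coeff_mul_basisDivisor hdeg_upper, ← neg_sub (y (i + 1 + d)) (y i), div_neg]
    ring

theorem divDiff_eval_eq_eval_divByMonic_nodal (P : ℝ[X]) (y : ℕ → ℝ) (i d : ℕ)
    (hy : Set.InjOn y (Icc i (i + d))) :
    divDiff (fun t => P.eval t) y i (i + d) =
      (P /ₘ nodal (Icc (i + 1) (i + d)) y).eval (y i) := by
  have hi : i ∉ Icc (i + 1) (i + d) := by simp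
  have hcard : #(Icc (i + 1) (i + d)) = d := by simp
  rw [← coeff_modByMonic_nodal_insert hi, insert_Icc_add_one_left_eq_Icc (by omega), hcard,
    ← interpolate_eval_eq_modByMonic_nodal hy]
  exact divDiff_eq_coeff_interpolate _ y i d hy

theorem divDiff_cons_eq_eval_divByMonic_nodal (P : ℝ[X]) (X : ℕ → ℝ) (r : ℕ) (t : ℝ)
    (ht : ∀ i < r, X i ≠ t) (hX : Set.InjOn X (range r)) :
    divDiff (fun y => P.eval y) (fun i => if i = 0 then t else X (i - 1)) 0 r =
      (P /ₘ nodal (range r) X).eval t := by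
  set y : ℕ → ℝ := fun i => if i = 0 then t else X (i - 1) with hy
  have hinj : Set.InjOn y (Icc 0 (0 + r)) := by
    rintro (_ | k) hk (_ | l) hl hkl <;>
      simp only [hy, coe_Icc, Set.mem_Icc, Nat.add_sub_cancel, if_true, Nat.succ_ne_zero,
        if_false] at hk hl hkl
    · rfl
    · exact absurd hkl.symm (ht l (by omega))
    · exact absurd hkl (ht k (by omega))
    · rw [hX (by simpa using hk) (by simpa using hl) hkl]
  have hnodal : nodal (Icc 1 r) y = nodal (range r) X := by
    simp [nodal, hy, ← Ico_add_one_right_eq_Icc, prod_Ico_eq_prod_range]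
  have hdiv := divDiff_eval_eq_eval_divByMonic_nodal P y 0 r hinj
  rw [zero_add, zero_add, hnodal] at hdiv
  exact hdiv

lemma neville_eq_eval_interpolate (xs : ℕ → ℝ) (x : ℝ) (g : ℕ → ℝ) (i j : ℕ)
    (hxs : Set.InjOn xs (Icc j (i + j))) :
    neville xs x g i j = (interpolate (Icc j (i + j)) xs g).eval x := by
  induction i generalizing j with
  | zero => simp [neville]
  | succ i ih =>
    have hlower : Set.InjOn xs (Icc j (i + j)) :=
      hxs.mono <| coe_subset.2 <| Icc_subset_Icc_right (by omega)
    have hupper : Set.InjOn xs (Icc (j + 1) (i + (j + 1))) :=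
      hxs.mono <| coe_subset.2 <| Icc_subset_Icc (by omega) (by omega)
    rw [neville, ih j hlower, ih (j + 1) hupper, interpolate_Icc_eq_add xs g (by omega) hxs,
      show i + 1 + j - 1 = i + j by omega, show i + (j + 1) = i + 1 + j by omega]
    simp only [basisDivisor, eval_add, eval_mul, eval_C, eval_sub, eval_X]
    rw [← neg_sub (xs (i + 1 + j)) (xs j), inv_neg]
    ring

theorem neville_eq_eval {Q : ℝ[X]} {xs : ℕ → ℝ} {g : ℕ → ℝ} {i j : ℕ}
    (hxs : Set.InjOn xs (Icc j (i + j))) (hQ : Q.degree ≤ i)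
    (hg : ∀ k ∈ Icc j (i + j), Q.eval (xs k) = g k) (x : ℝ) :
    neville xs x g i j = Q.eval x := by
  have hcard : #(Icc j (i + j)) = i + 1 := by rw [Nat.card_Icc]; omega
  have hlt : Q.degree < #(Icc j (i + j)) := by
    rw [hcard]
    exact hQ.trans_lt (by exact_mod_cast Nat.lt_succ_self i)
  rw [neville_eq_eval_interpolate xs x g i j hxs, ← eq_interpolate_of_eval_eq g hxs hlt hg]

theorem stmt_12_general {n r : ℕ} (hrn : r ≤ n) {P : ℝ[X]} (hP : P.degree ≤ n) {x : ℝ}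
    {X : ℕ → ℝ} (hxX : ∀ i < r, X i ≠ x) (hX : Set.InjOn X (Set.Iic n)) :
    divDiff (fun y => P.eval y) (fun i => if i = 0 then x else X (i - 1)) 0 r =
      neville X x (fun j => divDiff (fun y => P.eval y)
        (fun i => if i = 0 then X j else X (i - 1)) 0 r) (n - r) r := by
  have hbase : Set.InjOn X (range r) := hX.mono fun i hi => by
    simp only [coe_range, Set.mem_Iio, Set.mem_Iic] at hi ⊢; omega
  have hnodes : Set.InjOn X (Icc r (n - r + r)) := hX.mono fun i hi => by
    simp only [coe_Icc, Set.mem_Icc, Set.mem_Iic] at hi ⊢; omega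
  have hdeg : (P /ₘ nodal (range r) X).degree ≤ (n - r : ℕ) := by
    refine degree_le_of_natDegree_le ?_
    rw [natDegree_divByMonic _ nodal_monic, natDegree_nodal, card_range]
    exact Nat.sub_le_sub_right (natDegree_le_of_degree_le hP) r
  rw [divDiff_cons_eq_eval_divByMonic_nodal P X r x hxX hbase]
  refine (neville_eq_eval hnodes hdeg (fun k hk => ?_) x).symm
  have hk' := mem_Icc.1 hk
  refine (divDiff_cons_eq_eval_divByMonic_nodal P X r (X k) (fun i hi => ?_) hbase).symm
  exact hX.ne (Set.mem_Iic.2 (by omega)) (Set.mem_Iic.2 (by omega)) (by omega)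

end

theorem stmt_12 (n r : ℕ) (hr : 1 ≤ r) (hrn : r ≤ n)
    (P : Polynomial ℝ) (hP : P.degree ≤ (n : WithBot ℕ)) (x : ℝ) (X : ℕ → ℝ)
    (hxX : ∀ i ≤ n, X i ≠ x)
    (hXX : ∀ i j, i ≤ n → j ≤ n → i ≠ j → X i ≠ X j) :
    divDiff (fun y => P.eval y) (fun i => if i = 0 then x else X (i - 1)) 0 r = neville X x (fun j => divDiff (fun y => P.eval y) (fun i => if i = 0 then X j else X (i - 1)) 0 r) (n - r) r := by
  exact stmt_12_general hrn hP (fun i hi => hxX i (hi.le.trans hrn))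
    fun i hi j hj => not_imp_not.1 (hXX i j hi hj)
end
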